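/- Let ω ∈ DC(c,τ) with τ > d−1 and let g ∈ H_Δ^0 with sup norm |g|_Δ on the strip of width Δ. Then the unique zero-average solution f of L_ω f = g satisfies, for each 0 < δ < Δ, the bound |f|_{Δ−δ} ≤ C(τ,d) δ^{−(d+τ)} |g|_Δ / c, where C(τ,d) depends only on τ and d. -/

import Mathlib

open MeasureTheory Real Complex

noncomputable section

def strip (d : ℕ) (Δ : ℝ) : Set (Fin d → ℂ) := {z | ∀ i, |(z i).im| ≤ Δ}

def Per (d : ℕ) (f : (Fin d → ℂ) → ℂ) : Prop :=
  ∀ z : Fin d → ℂ, ∀ k : Fin d → ℤ, f (z + fun i => 2 * π * (k i : ℂ)) = f z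

def ZeroAvg (d : ℕ) (f : (Fin d → ℂ) → ℂ) : Prop :=
  (∫ θ in Set.Icc (0 : Fin d → ℝ) (fun _ => 2 * π), f (fun i => (θ i : ℂ))) = 0

def IsSol (d : ℕ) (Δ' : ℝ) (ω : Fin d → ℝ) (g f : (Fin d → ℂ) → ℂ) : Prop :=
  (∀ z ∈ strip d Δ', DifferentiableAt ℂ f z) ∧ Per d f ∧ ZeroAvg d f ∧
  ∀ z ∈ strip d Δ', fderiv ℂ f z (fun i => (ω i : ℂ)) = g z

/-
Shifting the real torus inside the strip shows that the Fourier coefficients of `g` on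
`{Im z = y}`, `|y|_∞ ≤ Δ - δ`, are at most `|g|_Δ exp (-δ ‖k‖₁)`. On the same torus the equation
`L_ω f = g` reads `i (ω·k) f̂(k) = ĝ(k)`, so the small divisors cost a factor `‖k‖₁ ^ τ / c`, which
half of the decay absorbs as `(2τ/δ) ^ τ`; summing the remaining `exp (-δ ‖k‖₁ / 2)` over `k ≠ 0`
gives `δ ^ (-d)`.
-/

section CompactGroupAverage

variable {A E : Type*} [AddGroup A] [TopologicalSpace A] [ContinuousAdd A] [CompactSpace A]
  [SecondCountableTopology A] [MeasurableSpace A] [BorelSpace A] {μ : Measure A}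
  [IsFiniteMeasure μ] [μ.IsAddRightInvariant] [NormedAddCommGroup E] [NormedSpace ℝ E]
  [CompleteSpace E]

lemma integral_intervalIntegral_add_right {F : A → E} (hF : Continuous F) {v : ℝ → A}
    (hv : Continuous v) :
    ∫ x, (∫ t in (0 : ℝ)..1, F (x + v t)) ∂μ = ∫ x, F x ∂μ := by
  have hcont : Continuous (Function.uncurry fun (t : ℝ) (x : A) => F (x + v t)) := by
    unfold Function.uncurry
    fun_prop
  obtain ⟨B, hB⟩ := isCompact_univ.exists_bound_of_continuousOn hF.continuousOn
  have hint : Integrable (Function.uncurry fun (t : ℝ) (x : A) => F (x + v t))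
      ((volume.restrict (Set.uIoc (0 : ℝ) 1)).prod μ) := by
    rw [Set.uIoc_of_le zero_le_one]
    exact .of_bound hcont.aestronglyMeasurable B (.of_forall fun _ => hB _ trivial)
  rw [← intervalIntegral_integral_swap hint]
  simp only [integral_add_right_eq_self, intervalIntegral.integral_const, sub_zero, one_smul]

lemma integral_eq_zero_of_hasDerivAt_add_right {F G : A → E}
    (hF : Continuous F) (hG : Continuous G) {v : ℝ → A} (hv : Continuous v)
    (hderiv : ∀ x t, HasDerivAt (fun t => F (x + v t)) (G (x + v t)) t) :
    ∫ x, G x ∂μ = 0 := by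
  have hFTC (x : A) : ∫ t in (0 : ℝ)..1, G (x + v t) = F (x + v 1) - F (x + v 0) :=
    intervalIntegral.integral_eq_sub_of_hasDerivAt (fun t _ => hderiv x t)
      (Continuous.intervalIntegrable (by fun_prop) 0 1)
  rw [← integral_intervalIntegral_add_right hG hv]
  simp only [hFTC]
  rw [integral_sub, integral_add_right_eq_self, integral_add_right_eq_self, sub_self]
  all_goals
  · exact Continuous.integrable_of_hasCompactSupport (by fun_prop) (.of_compactSpace _)

end CompactGroupAverage

section Exp

lemma rpow_le_mul_exp {τ s x : ℝ} (hτ : 0 ≤ τ) (hs : 0 < s) (hx : 0 ≤ x) :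
    x ^ τ ≤ (τ / s) ^ τ * Real.exp (s * x) := by
  rcases hτ.eq_or_lt with rfl | hτ
  · simpa using mul_nonneg hs.le hx
  have hlin : x ≤ τ / s * Real.exp (s * x / τ) := calc
    x = τ / s * (s * x / τ) := by field_simp
    _ ≤ τ / s * Real.exp (s * x / τ) := by
      gcongr
      linarith [Real.add_one_le_exp (s * x / τ)]
  calc x ^ τ ≤ (τ / s * Real.exp (s * x / τ)) ^ τ := Real.rpow_le_rpow hx hlin hτ.le
    _ = (τ / s) ^ τ * Real.exp (s * x) := by
      rw [Real.mul_rpow (by positivity) (Real.exp_pos _).le, ← Real.exp_mul,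
        div_mul_cancel₀ _ hτ.ne']

lemma sum_prod_apply_le_pow {ι κ : Type*} [Fintype ι] {h : κ → ℝ} {B : ℝ}
    (h_nonneg : ∀ n, 0 ≤ h n) (h_sum : ∀ A : Finset κ, ∑ n ∈ A, h n ≤ B) (S : Finset (ι → κ)) :
    ∑ k ∈ S, ∏ i, h (k i) ≤ B ^ Fintype.card ι := by
  classical
  let A : Finset κ := S.biUnion fun k => Finset.univ.image k
  have hSA : S ⊆ Fintype.piFinset fun _ : ι => A := fun k hk =>
    Fintype.mem_piFinset.2 fun i =>
      Finset.mem_biUnion.2 ⟨k, hk, Finset.mem_image_of_mem k (Finset.mem_univ i)⟩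
  calc ∑ k ∈ S, ∏ i, h (k i)
      ≤ ∑ k ∈ Fintype.piFinset fun _ : ι => A, ∏ i, h (k i) :=
        Finset.sum_le_sum_of_subset_of_nonneg hSA fun _ _ _ =>
          Finset.prod_nonneg fun _ _ => h_nonneg _
    _ = (∑ n ∈ A, h n) ^ Fintype.card ι := by
        rw [Finset.sum_prod_piFinset A fun _ => h, Finset.prod_const, Finset.card_univ]
    _ ≤ B ^ Fintype.card ι := pow_le_pow_left₀ (Finset.sum_nonneg fun n _ => h_nonneg n) (h_sum A) _

lemma sum_exp_neg_mul_abs_le {a : ℝ} (ha : 0 < a) (A : Finset ℤ) :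
    ∑ n ∈ A, Real.exp (-(a * |(n : ℝ)|)) ≤ 1 + 2 / a := by
  have hgeom : HasSum (fun n : ℕ => Real.exp (-(a * n))) (1 - Real.exp (-a))⁻¹ := by
    convert hasSum_geometric_of_lt_one (Real.exp_pos (-a)).le (by simpa using ha) using 2 with n
    rw [← Real.exp_nat_mul]
    ring_nf
  have hsum : HasSum (fun n : ℤ => Real.exp (-(a * |(n : ℝ)|)))
      ((1 - Real.exp (-a))⁻¹ + (1 - Real.exp (-a))⁻¹ - 1) := by
    simpa using HasSum.of_nat_of_neg (f := fun n : ℤ => Real.exp (-(a * |(n : ℝ)|)))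
      (by simpa using hgeom) (by simpa using hgeom)
  have hratio : (1 - Real.exp (-a))⁻¹ ≤ 1 + 1 / a := by
    have hexp : Real.exp (-a) ≤ (1 + a)⁻¹ := by
      rw [Real.exp_neg]
      gcongr
      linarith [Real.add_one_le_exp a]
    calc (1 - Real.exp (-a))⁻¹
        ≤ (1 - (1 + a)⁻¹)⁻¹ := by
          gcongr
          exact sub_pos.2 (inv_lt_one_of_one_lt₀ (by linarith))
      _ = (a / (1 + a))⁻¹ := by
          congr 1
          field_simp
          ring
      _ = 1 + 1 / a := by
          field_simp
          ring
  calc ∑ n ∈ A, Real.exp (-(a * |(n : ℝ)|))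
      ≤ (1 - Real.exp (-a))⁻¹ + (1 - Real.exp (-a))⁻¹ - 1 :=
        sum_le_hasSum A (fun _ _ => (Real.exp_pos _).le) hsum
    _ ≤ (1 + 1 / a) + (1 + 1 / a) - 1 := by gcongr
    _ = 1 + 2 / a := by ring

variable {ι : Type*} [Fintype ι]

lemma one_le_sum_abs_intCast {k : ι → ℤ} (hk : k ≠ 0) : 1 ≤ ∑ i, |(k i : ℝ)| := by
  obtain ⟨j, hj⟩ := Function.ne_iff.1 hk
  calc (1 : ℝ) ≤ |(k j : ℝ)| := mod_cast Int.one_le_abs hj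
    _ ≤ ∑ i, |(k i : ℝ)| :=
      Finset.single_le_sum (f := fun i => |(k i : ℝ)|) (fun _ _ => abs_nonneg _) (Finset.mem_univ j)

lemma sum_exp_neg_mul_sum_abs_le {a : ℝ} (ha : 0 < a) (S : Finset (ι → ℤ)) :
    ∑ k ∈ S, Real.exp (-(a * ∑ i, |(k i : ℝ)|)) ≤ (1 + 2 / a) ^ Fintype.card ι := by
  simpa only [Finset.mul_sum, ← Finset.sum_neg_distrib, Real.exp_sum] using
    sum_prod_apply_le_pow (fun _ => (Real.exp_pos _).le) (sum_exp_neg_mul_abs_le ha) S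

/- Half of the exponent pays for the sum over `ℤᵈ`; since `‖k‖₁ ≥ 1`, the other half absorbs the
growth of `(1 + 4 / a) ^ d * a ^ d` for large `a`. -/
lemma sum_exp_neg_mul_sum_abs_le_of_zero_notMem {a : ℝ} (ha : 0 < a) {S : Finset (ι → ℤ)}
    (hS : 0 ∉ S) :
    ∑ k ∈ S, Real.exp (-(a * ∑ i, |(k i : ℝ)|)) ≤
      Real.exp 2 * (2 * Fintype.card ι / a) ^ Fintype.card ι := by
  set n := Fintype.card ι
  have hpow : (4 + a) ^ n ≤ (2 * n) ^ n * Real.exp (2 + a / 2) := by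
    convert rpow_le_mul_exp (x := 4 + a) (τ := n) (s := 1 / 2) (by positivity) (by norm_num)
      (by positivity) using 1
    · rw [Real.rpow_natCast]
    · rw [Real.rpow_natCast]
      ring_nf
  calc ∑ k ∈ S, Real.exp (-(a * ∑ i, |(k i : ℝ)|))
      ≤ ∑ k ∈ S, Real.exp (-(a / 2)) * Real.exp (-(a / 2 * ∑ i, |(k i : ℝ)|)) := by
        gcongr with k hk
        rw [← Real.exp_add, Real.exp_le_exp]
        nlinarith [one_le_sum_abs_intCast (ne_of_mem_of_not_mem hk hS)]
    _ ≤ Real.exp (-(a / 2)) * (1 + 2 / (a / 2)) ^ n := by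
        rw [← Finset.mul_sum]
        gcongr
        exact sum_exp_neg_mul_sum_abs_le (half_pos ha) S
    _ = Real.exp (-(a / 2)) * (4 + a) ^ n / a ^ n := by
        rw [mul_div_assoc, ← div_pow]
        congr 2
        field_simp
        ring
    _ ≤ Real.exp (-(a / 2)) * ((2 * n) ^ n * Real.exp (2 + a / 2)) / a ^ n := by gcongr
    _ = Real.exp 2 * (2 * n / a) ^ n := by
        rw [mul_left_comm, ← Real.exp_add, neg_add_cancel_comm_assoc, div_pow]
        ring

end Exp

section Torus

variable {d : ℕ}

/-- The normalised Haar measure on `(ℝ/ℤ)ᵈ`, the one against which `UnitAddTorus.mFourierCoeff`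
integrates. -/
abbrev torusHaar (d : ℕ) : Measure (UnitAddTorus (Fin d)) :=
  Measure.pi fun _ => AddCircle.haarAddCircle

/-- The covering map `ℝᵈ → ℝᵈ/2πℤᵈ`, with the quotient rescaled to the unit torus `(ℝ/ℤ)ᵈ`. -/
def toTorus (θ : Fin d → ℝ) : UnitAddTorus (Fin d) := fun i => ((θ i / (2 * π) : ℝ) : UnitAddCircle)

lemma isOpenQuotientMap_toTorus : IsOpenQuotientMap (toTorus (d := d)) :=
  IsOpenQuotientMap.piMap fun _ =>
    (QuotientAddGroup.isOpenQuotientMap_mk).comp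
      (Homeomorph.mulRight₀ (2 * π)⁻¹ (by positivity)).isOpenQuotientMap

@[fun_prop]
lemma continuous_toTorus : Continuous (toTorus (d := d)) := isOpenQuotientMap_toTorus.continuous

lemma toTorus_add (θ η : Fin d → ℝ) : toTorus (θ + η) = toTorus θ + toTorus η := by
  funext i
  simp [toTorus, add_div]

lemma toTorus_eq_toTorus_iff {θ η : Fin d → ℝ} :
    toTorus θ = toTorus η ↔ ∃ n : Fin d → ℤ, ∀ i, θ i = η i + 2 * π * n i := by
  have hcoord (i : Fin d) : toTorus θ i = toTorus η i ↔ ∃ n : ℤ, θ i = η i + 2 * π * n := by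
    rw [toTorus, toTorus, ← sub_eq_zero, ← AddCircle.coe_sub, AddCircle.coe_eq_zero_iff]
    refine exists_congr fun n => ?_
    rw [zsmul_one, ← sub_div, eq_div_iff (by positivity), eq_comm, sub_eq_iff_eq_add']
    ring_nf
  rw [funext_iff, forall_congr' hcoord, Classical.skolem]

lemma mFourier_toTorus (k : Fin d → ℤ) (θ : Fin d → ℝ) :
    UnitAddTorus.mFourier k (toTorus θ) = cexp (I * (∑ i, θ i * k i : ℝ)) := by
  simp only [UnitAddTorus.mFourier, ContinuousMap.coe_mk, toTorus, fourier_coe_apply]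
  push_cast
  rw [← Complex.exp_sum, Finset.mul_sum]
  congr! 2 with i
  field_simp

lemma hasDerivAt_mFourier_add_toTorus (k : Fin d → ℤ) (ω : Fin d → ℝ)
    (x : UnitAddTorus (Fin d)) (t : ℝ) :
    HasDerivAt (fun t : ℝ => UnitAddTorus.mFourier k (x + toTorus (t • ω)))
      (I * (∑ i, ω i * k i : ℝ) * UnitAddTorus.mFourier k (x + toTorus (t • ω))) t := by
  obtain ⟨θ, rfl⟩ := isOpenQuotientMap_toTorus.surjective x
  simp only [← toTorus_add, mFourier_toTorus]
  have hphase : HasDerivAt (fun t : ℝ => I * ((∑ i, (θ + t • ω) i * k i : ℝ) : ℂ))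
      (I * (∑ i, ω i * k i : ℝ)) t := by
    refine .const_mul _ (HasDerivAt.ofReal_comp (.fun_sum fun i _ => .mul_const ?_ _))
    simpa using ((hasDerivAt_id t).mul_const (ω i)).const_add (θ i)
  simpa only [mul_comm] using hphase.cexp

lemma mFourierCoeff_eq_integral_torusHaar (F : UnitAddTorus (Fin d) → ℂ) (k : Fin d → ℤ) :
    UnitAddTorus.mFourierCoeff F k =
      ∫ x, UnitAddTorus.mFourier (-k) x * F x ∂torusHaar d := rfl

lemma norm_mFourierCoeff_le {F : UnitAddTorus (Fin d) → ℂ} {M : ℝ} (hF : ∀ x, ‖F x‖ ≤ M)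
    (k : Fin d → ℤ) : ‖UnitAddTorus.mFourierCoeff F k‖ ≤ M := by
  have hbound (x : UnitAddTorus (Fin d)) : ‖UnitAddTorus.mFourier (-k) x * F x‖ ≤ M := calc
    ‖UnitAddTorus.mFourier (-k) x * F x‖
        = ‖UnitAddTorus.mFourier (-k) x‖ * ‖F x‖ := norm_mul _ _
    _ ≤ 1 * ‖F x‖ := by
        gcongr
        exact ((UnitAddTorus.mFourier (-k)).norm_coe_le_norm x).trans UnitAddTorus.mFourier_norm.le
    _ ≤ M := (one_mul _).trans_le (hF x)
  rw [mFourierCoeff_eq_integral_torusHaar]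
  simpa using norm_integral_le_of_norm_le_const (μ := torusHaar d) (.of_forall hbound)

lemma mFourierCoeff_eq_of_hasDerivAt {F G : UnitAddTorus (Fin d) → ℂ} (hF : Continuous F)
    (hG : Continuous G) {ω : Fin d → ℝ}
    (hderiv : ∀ x t, HasDerivAt (fun t : ℝ => F (x + toTorus (t • ω))) (G (x + toTorus (t • ω))) t)
    (k : Fin d → ℤ) :
    UnitAddTorus.mFourierCoeff G k =
      I * (∑ i, ω i * k i : ℝ) * UnitAddTorus.mFourierCoeff F k := by
  have hparts : ∫ x, (UnitAddTorus.mFourier (-k) x * G x -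
      I * (∑ i, ω i * k i : ℝ) * (UnitAddTorus.mFourier (-k) x * F x)) ∂torusHaar d = 0 := by
    refine integral_eq_zero_of_hasDerivAt_add_right
      (F := fun x => UnitAddTorus.mFourier (-k) x * F x) (v := fun t => toTorus (t • ω))
      (by fun_prop) (by fun_prop) (by fun_prop) fun x t => ?_
    refine ((hasDerivAt_mFourier_add_toTorus (-k) ω x t).fun_mul (hderiv x t)).congr_deriv ?_
    simp only [Pi.neg_apply, Int.cast_neg, mul_neg, Finset.sum_neg_distrib, ofReal_neg]
    ring
  rw [integral_sub, integral_const_mul, sub_eq_zero] at hparts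
  · exact hparts
  all_goals exact Continuous.integrable_of_hasCompactSupport (by fun_prop) (.of_compactSpace _)

lemma norm_le_of_sum_norm_mFourierCoeff_le {F : UnitAddTorus (Fin d) → ℂ} (hF : Continuous F)
    {B : ℝ} (hB : ∀ S : Finset (Fin d → ℤ), ∑ k ∈ S, ‖UnitAddTorus.mFourierCoeff F k‖ ≤ B)
    (x : UnitAddTorus (Fin d)) : ‖F x‖ ≤ B := by
  have hsum : Summable fun k => ‖UnitAddTorus.mFourierCoeff F k‖ :=
    summable_of_sum_le (fun _ => norm_nonneg _) hB
  have hseries := UnitAddTorus.hasSum_mFourier_series_apply_of_summable (f := ⟨F, hF⟩)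
    hsum.of_norm x
  have hterm (k : Fin d → ℤ) :
      ‖UnitAddTorus.mFourierCoeff F k • UnitAddTorus.mFourier k x‖ ≤
        ‖UnitAddTorus.mFourierCoeff F k‖ := by
    rw [norm_smul]
    exact mul_le_of_le_one_right (norm_nonneg _)
      (((UnitAddTorus.mFourier k).norm_coe_le_norm x).trans UnitAddTorus.mFourier_norm.le)
  exact (hseries.norm_le_of_bounded hsum.hasSum hterm).trans (hsum.tsum_le_of_sum_le hB)

open scoped Pointwise in
lemma integral_torusHaar (F : UnitAddTorus (Fin d) → ℂ) :
    ∫ x, F x ∂torusHaar d =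
      ((2 * π) ^ d)⁻¹ • ∫ θ in Set.Icc (0 : Fin d → ℝ) (fun _ => 2 * π), F (toTorus θ) := by
  have htwo_pi : (0 : ℝ) < 2 * π := by positivity
  have hcube : (2 * π) • Set.Icc (0 : Fin d → ℝ) 1 = Set.Icc 0 (fun _ => 2 * π) := by
    refine ((OrderIso.smulRight htwo_pi).image_Icc _ _).trans
      (congrArg₂ Set.Icc (smul_zero (2 * π)) (funext fun _ => ?_))
    exact mul_one (2 * π)
  have hscale (x : Fin d → ℝ) : toTorus ((2 * π) • x) = fun i => (x i : UnitAddCircle) := by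
    funext i
    simp [toTorus, mul_div_cancel_left₀ _ htwo_pi.ne']
  calc ∫ x, F x ∂torusHaar d
      = ∫ x in {x : Fin d → ℝ | ∀ i, x i ∈ Set.Ioc 0 (0 + 1)},
          F (fun i => (x i : UnitAddCircle)) := UnitAddTorus.integral_preimage F 0
    _ = ∫ x in Set.Icc (0 : Fin d → ℝ) 1, F (toTorus ((2 * π) • x)) := by
        simp only [hscale, zero_add]
        have hcube_Ioc : {x : Fin d → ℝ | ∀ i, x i ∈ Set.Ioc 0 1} =
            Set.univ.pi fun i => Set.Ioc ((0 : Fin d → ℝ) i) ((1 : Fin d → ℝ) i) := by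
          simp [Set.pi]
        rw [hcube_Ioc]
        exact setIntegral_congr_set Measure.univ_pi_Ioc_ae_eq_Icc
    _ = ((2 * π) ^ d)⁻¹ • ∫ θ in Set.Icc (0 : Fin d → ℝ) (fun _ => 2 * π), F (toTorus θ) := by
        rw [← hcube, Measure.setIntegral_comp_smul_of_pos volume (fun θ => F (toTorus θ)) _ htwo_pi,
          Module.finrank_fin_fun]

end Torus

section Slice

variable {d : ℕ} {u : (Fin d → ℂ) → ℂ}

/-- The point `x + iy` of `ℂᵈ`. -/
def ofReIm (x y : Fin d → ℝ) : Fin d → ℂ := fun i => x i + y i * I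

lemma ofReIm_zero (x : Fin d → ℝ) : ofReIm x 0 = fun i => (x i : ℂ) := by
  funext i
  simp [ofReIm]

lemma continuous_ofReIm : Continuous fun p : (Fin d → ℝ) × (Fin d → ℝ) => ofReIm p.1 p.2 := by
  unfold ofReIm
  fun_prop

lemma ofReIm_add_smul (θ y w : Fin d → ℝ) (ζ : ℂ) :
    ofReIm θ y + ζ • (fun i => (w i : ℂ)) = ofReIm (θ + ζ.re • w) (y + ζ.im • w) := by
  funext i
  simp only [ofReIm, Pi.add_apply, Pi.smul_apply, smul_eq_mul, ofReal_add, ofReal_mul]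
  linear_combination (w i : ℂ) * (re_add_im ζ).symm

lemma ofReIm_mem_strip {θ y : Fin d → ℝ} {r : ℝ} :
    ofReIm θ y ∈ strip d r ↔ y ∈ Set.Icc (fun _ => -r) fun _ => r := by
  simp [ofReIm, strip, abs_le, Pi.le_def, forall_and]

/-- The function `ℝᵈ/2πℤᵈ → ℂ` induced by `x ↦ u (x + iy)`. It is evaluated at a chosen lift of the
point of the torus, which is immaterial as soon as `u` is periodic. -/
def torusSlice (u : (Fin d → ℂ) → ℂ) (y : Fin d → ℝ) (x : UnitAddTorus (Fin d)) : ℂ :=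
  u (ofReIm (Function.surjInv isOpenQuotientMap_toTorus.surjective x) y)

lemma torusSlice_toTorus (hu : Per d u) (θ y : Fin d → ℝ) :
    torusSlice u y (toTorus θ) = u (ofReIm θ y) := by
  obtain ⟨n, hn⟩ := toTorus_eq_toTorus_iff.1
    (Function.surjInv_eq isOpenQuotientMap_toTorus.surjective (toTorus θ))
  rw [torusSlice, ← hu (ofReIm θ y) n]
  congr 1
  funext i
  simp only [ofReIm, hn, Pi.add_apply]
  push_cast
  ring

lemma continuousAt_torusSlice (hu : Per d u) {θ y : Fin d → ℝ}
    (hc : ContinuousAt u (ofReIm θ y)) :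
    ContinuousAt (fun p : (Fin d → ℝ) × UnitAddTorus (Fin d) => torusSlice u p.1 p.2)
      (y, toTorus θ) := by
  have hq : IsOpenQuotientMap (Prod.map id toTorus :
      (Fin d → ℝ) × (Fin d → ℝ) → (Fin d → ℝ) × UnitAddTorus (Fin d)) :=
    IsOpenQuotientMap.id.prodMap isOpenQuotientMap_toTorus
  refine (hq.continuousAt_comp_iff (x := (y, θ))).1 ?_
  simp only [Function.comp_def, Prod.map_fst, Prod.map_snd, id_eq, torusSlice_toTorus hu]
  exact hc.comp (f := fun p : (Fin d → ℝ) × (Fin d → ℝ) => ofReIm p.2 p.1)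
    (continuous_ofReIm.comp continuous_swap).continuousAt

lemma continuous_torusSlice (hu : Per d u) {y : Fin d → ℝ}
    (hc : ∀ θ, ContinuousAt u (ofReIm θ y)) : Continuous (torusSlice u y) := by
  refine continuous_iff_continuousAt.2 fun x => ?_
  obtain ⟨θ, rfl⟩ := isOpenQuotientMap_toTorus.surjective x
  exact (continuousAt_torusSlice hu (hc θ)).comp (f := fun x => (y, x)) (by fun_prop)

lemma hasDerivAt_torusSlice_add {f g : (Fin d → ℂ) → ℂ} (hf : Per d f) (hg : Per d g)
    {ω y : Fin d → ℝ} (hdiff : ∀ θ, DifferentiableAt ℂ f (ofReIm θ y))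
    (hfg : ∀ θ, fderiv ℂ f (ofReIm θ y) (fun i => (ω i : ℂ)) = g (ofReIm θ y))
    (x : UnitAddTorus (Fin d)) (t : ℝ) :
    HasDerivAt (fun t : ℝ => torusSlice f y (x + toTorus (t • ω)))
      (torusSlice g y (x + toTorus (t • ω))) t := by
  obtain ⟨θ, rfl⟩ := isOpenQuotientMap_toTorus.surjective x
  have hline (t : ℝ) : ofReIm (θ + t • ω) y = ofReIm θ y + (t : ℂ) • fun i => (ω i : ℂ) := by
    rw [ofReIm_add_smul, ofReal_re, ofReal_im, zero_smul, add_zero]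
  have hline_deriv : HasDerivAt (fun t : ℝ => ofReIm (θ + t • ω) y) (fun i => (ω i : ℂ)) t := by
    simp only [hline]
    simpa using ((hasDerivAt_id t).ofReal_comp.smul_const fun i => (ω i : ℂ)).const_add (ofReIm θ y)
  simp only [← toTorus_add, torusSlice_toTorus hf, torusSlice_toTorus hg, ← hfg]
  exact ((hdiff _).hasFDerivAt.restrictScalars ℝ).comp_hasDerivAt t hline_deriv

end Slice

section ContourShift

variable {d : ℕ} {u : (Fin d → ℂ) → ℂ} {K : Set (Fin d → ℝ)}

lemma intervalIntegral_torusSlice_sub (hu : Per d u) (hK : Convex ℝ K)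
    (hdiff : ∀ θ, ∀ y ∈ K, DifferentiableAt ℂ u (ofReIm θ y)) {y w : Fin d → ℝ} (hy : y ∈ K)
    (hyw : y + w ∈ K) (x : UnitAddTorus (Fin d)) :
    (∫ t in (0 : ℝ)..1, torusSlice u y (x + toTorus (t • w))) -
        ∫ t in (0 : ℝ)..1, torusSlice u (y + w) (x + toTorus (t • w)) =
      I * ((∫ s in (0 : ℝ)..1, torusSlice u (y + s • w) x) -
        ∫ s in (0 : ℝ)..1, torusSlice u (y + s • w) (x + toTorus w)) := by
  obtain ⟨θ, rfl⟩ := isOpenQuotientMap_toTorus.surjective x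
  have hrect := integral_boundary_rect_eq_zero_of_differentiableOn
    (fun ζ => u (ofReIm θ y + ζ • fun i => (w i : ℂ))) 0 (1 + I) fun ζ hζ => by
      have him : ζ.im ∈ Set.Icc (0 : ℝ) 1 := by simpa using hζ.2
      have hdiffζ := hdiff (θ + ζ.re • w) _ (hK.add_smul_mem hy hyw him)
      rw [← ofReIm_add_smul] at hdiffζ
      exact (hdiffζ.comp ζ (by fun_prop)).differentiableWithinAt
  simp only [ofReIm_add_smul] at hrect
  simp only [← toTorus_add, torusSlice_toTorus hu, mul_sub]
  rw [← sub_eq_zero, ← hrect]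
  simp only [zero_re, zero_im, add_re, add_im, one_re, one_im, I_re, I_im, mul_re, mul_im,
    ofReal_re, ofReal_im, ofReal_zero, ofReal_one, zero_mul, mul_zero, one_mul, mul_one, zero_add,
    add_zero, sub_self, zero_smul, one_smul, smul_eq_mul]
  ring

lemma integrable_intervalIntegral_torusSlice (hu : Per d u) (hK : Convex ℝ K)
    (hcont : ∀ θ, ∀ y ∈ K, ContinuousAt u (ofReIm θ y)) {y w : Fin d → ℝ} (hy : y ∈ K)
    (hyw : y + w ∈ K) :
    Integrable (fun x => ∫ s in (0 : ℝ)..1, torusSlice u (y + s • w) x) (torusHaar d) := by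
  have hcontOn : ContinuousOn
      (fun p : UnitAddTorus (Fin d) × ℝ => torusSlice u (y + p.2 • w) p.1)
      (Set.univ ×ˢ Set.Icc 0 1) := fun ⟨x, s⟩ hs => by
    obtain ⟨θ, rfl⟩ := isOpenQuotientMap_toTorus.surjective x
    have hslice := continuousAt_torusSlice hu (hcont θ _ (hK.add_smul_mem hy hyw hs.2))
    exact (hslice.comp (f := fun p : UnitAddTorus (Fin d) × ℝ => (y + p.2 • w, p.1))
      (x := (toTorus θ, s)) (by fun_prop)).continuousWithinAt
  have hint := hcontOn.integrableOn_compact (μ := (torusHaar d).prod volume)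
    (isCompact_univ.prod isCompact_Icc)
  rw [IntegrableOn, ← Measure.prod_restrict, Measure.restrict_univ] at hint
  simpa only [intervalIntegral.integral_of_le zero_le_one, ← integral_Icc_eq_integral_Ioc] using
    hint.integral_prod_left

/- Cauchy's theorem on the rectangles `ζ ↦ x + iy + ζw`, `ζ ∈ [0, 1] × [0, 1]`. After averaging over
`x` the two lateral sides cancel, because they differ by the translation `w`. -/
lemma integral_torusSlice_eq (hu : Per d u) (hK : Convex ℝ K)
    (hdiff : ∀ θ, ∀ y ∈ K, DifferentiableAt ℂ u (ofReIm θ y)) {y y' : Fin d → ℝ} (hy : y ∈ K)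
    (hy' : y' ∈ K) :
    ∫ x, torusSlice u y x ∂torusHaar d = ∫ x, torusSlice u y' x ∂torusHaar d := by
  obtain ⟨w, rfl⟩ : ∃ w, y' = y + w := ⟨y' - y, by abel⟩
  have hcont : ∀ θ, ∀ y ∈ K, ContinuousAt u (ofReIm θ y) :=
    fun θ y hy => (hdiff θ y hy).continuousAt
  have hslice {y : Fin d → ℝ} (hy : y ∈ K) : Continuous (torusSlice u y) :=
    continuous_torusSlice hu fun θ => hcont θ y hy
  let side (x : UnitAddTorus (Fin d)) : ℂ := ∫ s in (0 : ℝ)..1, torusSlice u (y + s • w) x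
  have hside : Integrable side (torusHaar d) :=
    integrable_intervalIntegral_torusSlice hu hK hcont hy hy'
  have hrect (x : UnitAddTorus (Fin d)) :
      ∫ t in (0 : ℝ)..1, (torusSlice u y (x + toTorus (t • w)) -
        torusSlice u (y + w) (x + toTorus (t • w))) = I * (side x - side (x + toTorus w)) := by
    rw [← intervalIntegral_torusSlice_sub hu hK hdiff hy hy' x, intervalIntegral.integral_sub] <;>
    exact Continuous.intervalIntegrable (by fun_prop) 0 1
  rw [← sub_eq_zero, ← integral_sub]
  · calc ∫ x, (torusSlice u y x - torusSlice u (y + w) x) ∂torusHaar d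
        = ∫ x, I * (side x - side (x + toTorus w)) ∂torusHaar d := by
          simp only [← hrect]
          exact (integral_intervalIntegral_add_right ((hslice hy).sub (hslice hy'))
            (v := fun t => toTorus (t • w)) (by fun_prop)).symm
      _ = 0 := by
          rw [integral_const_mul, integral_sub hside (hside.comp_add_right _),
            integral_add_right_eq_self side, sub_self, mul_zero]
  all_goals exact Continuous.integrable_of_hasCompactSupport (by fun_prop) (.of_compactSpace _)

/-- The character `z ↦ exp (i k·z)` of `ℂᵈ`, the entire extension of `UnitAddTorus.mFourier k`. -/
def planeWave (k : Fin d → ℤ) (z : Fin d → ℂ) : ℂ := cexp (I * ∑ i, z i * k i)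

lemma differentiable_planeWave (k : Fin d → ℤ) : Differentiable ℂ (planeWave k) := by
  unfold planeWave
  fun_prop

lemma planeWave_ofReIm (k : Fin d → ℤ) (θ y : Fin d → ℝ) :
    planeWave k (ofReIm θ y) =
      UnitAddTorus.mFourier k (toTorus θ) * Real.exp (-∑ i, y i * k i) := by
  rw [planeWave, mFourier_toTorus, ofReal_exp, ← Complex.exp_add]
  congr 1
  push_cast
  simp only [ofReIm, add_mul, Finset.sum_add_distrib, mul_add, mul_right_comm _ I, ← Finset.sum_mul]
  linear_combination (∑ i, (y i : ℂ) * k i) * I_mul_I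

lemma per_planeWave (k : Fin d → ℤ) : Per d (planeWave k) := fun z n => by
  rw [planeWave, planeWave, Complex.exp_eq_exp_iff_exists_int]
  refine ⟨∑ i, n i * k i, ?_⟩
  simp only [Pi.add_apply, add_mul, Finset.sum_add_distrib, mul_add, Int.cast_sum, Int.cast_mul,
    Finset.mul_sum, Finset.sum_mul]
  congr! 2
  ring

lemma Per.planeWave_mul (hu : Per d u) (k : Fin d → ℤ) : Per d fun z => planeWave k z * u z :=
  fun z n => congrArg₂ (· * ·) (per_planeWave k z n) (hu z n)

lemma torusSlice_planeWave_mul (hu : Per d u) (k : Fin d → ℤ) (y : Fin d → ℝ)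
    (x : UnitAddTorus (Fin d)) :
    torusSlice (fun z => planeWave k z * u z) y x =
      Real.exp (-∑ i, y i * k i) * (UnitAddTorus.mFourier k x * torusSlice u y x) := by
  obtain ⟨θ, rfl⟩ := isOpenQuotientMap_toTorus.surjective x
  rw [torusSlice_toTorus (hu.planeWave_mul k), torusSlice_toTorus hu, planeWave_ofReIm]
  ring

lemma exp_mul_mFourierCoeff_torusSlice_eq (hu : Per d u) (hK : Convex ℝ K)
    (hdiff : ∀ θ, ∀ y ∈ K, DifferentiableAt ℂ u (ofReIm θ y)) {y y' : Fin d → ℝ} (hy : y ∈ K)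
    (hy' : y' ∈ K) (k : Fin d → ℤ) :
    Real.exp (∑ i, y i * k i) * UnitAddTorus.mFourierCoeff (torusSlice u y) k =
      Real.exp (∑ i, y' i * k i) * UnitAddTorus.mFourierCoeff (torusSlice u y') k := by
  have hshift := integral_torusSlice_eq (hu.planeWave_mul (-k)) hK
    (fun θ y hy => (differentiable_planeWave (-k) _).mul (hdiff θ y hy)) hy hy'
  simpa [torusSlice_planeWave_mul hu, integral_const_mul, mFourierCoeff_eq_integral_torusHaar]
    using hshift

end ContourShift

section Strip

variable {d : ℕ}

lemma norm_mFourierCoeff_torusSlice_le_mul_exp {g : (Fin d → ℂ) → ℂ} {r δ M : ℝ} (hδ : 0 ≤ δ)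
    (hg : ∀ z ∈ strip d (r + δ), DifferentiableAt ℂ g z) (hper : Per d g)
    (hM : ∀ z ∈ strip d (r + δ), ‖g z‖ ≤ M) {y : Fin d → ℝ}
    (hy : y ∈ Set.Icc (fun _ => -r) fun _ => r) (k : Fin d → ℤ) :
    ‖UnitAddTorus.mFourierCoeff (torusSlice g y) k‖ ≤ M * Real.exp (-(δ * ∑ i, |(k i : ℝ)|)) := by
  have hstrip {η : Fin d → ℝ} (hη : |η| ≤ fun _ => δ) :
      y + η ∈ Set.Icc (fun _ => -(r + δ)) fun _ => r + δ := by
    constructor <;> intro i <;> simp only [Pi.add_apply] <;>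
    linarith [hy.1 i, hy.2 i, (abs_le.1 (hη i)).1, (abs_le.1 (hη i)).2]
  let η : Fin d → ℝ := fun i => -(δ * SignType.sign (k i : ℝ))
  have hη : |η| ≤ fun _ => δ := fun i => by
    rw [Pi.abs_apply, abs_neg, abs_mul, abs_of_nonneg hδ]
    refine mul_le_of_le_one_right hδ ?_
    rcases SignType.sign (k i : ℝ) with _ | _ | _ <;> simp
  have hphase : ∑ i, (y + η) i * k i = ∑ i, y i * k i - δ * ∑ i, |(k i : ℝ)| := by
    simp only [Pi.add_apply, η, add_mul, Finset.sum_add_distrib, Finset.mul_sum, ← sign_mul_self,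
      neg_mul, Finset.sum_neg_distrib, mul_assoc, sub_eq_add_neg]
  have hshift := exp_mul_mFourierCoeff_torusSlice_eq hper (convex_Icc _ _)
    (fun θ y hy => hg (ofReIm θ y) (ofReIm_mem_strip.2 hy))
    (hstrip (η := 0) fun _ => by simpa using hδ) (hstrip hη) k
  rw [hphase, sub_eq_add_neg, Real.exp_add, add_zero, ofReal_mul, mul_assoc,
    mul_right_inj' (ofReal_ne_zero.2 (Real.exp_ne_zero _))] at hshift
  rw [hshift, norm_mul, norm_real, Real.norm_of_nonneg (Real.exp_pos _).le, mul_comm]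
  gcongr
  exact norm_mFourierCoeff_le (fun x => hM _ (ofReIm_mem_strip.2 (hstrip hη))) k

lemma mFourierCoeff_torusSlice_zero_of_zeroAvg {f : (Fin d → ℂ) → ℂ} {r : ℝ}
    (hf : ∀ z ∈ strip d r, DifferentiableAt ℂ f z) (hper : Per d f) (havg : ZeroAvg d f)
    {y : Fin d → ℝ} (hy : y ∈ Set.Icc (fun _ => -r) fun _ => r) :
    UnitAddTorus.mFourierCoeff (torusSlice f y) 0 = 0 := by
  have hzero : (0 : Fin d → ℝ) ∈ Set.Icc (fun _ => -r) fun _ => r :=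
    ⟨fun i => by simp only [Pi.zero_apply]; linarith [hy.1 i, hy.2 i],
      fun i => by simp only [Pi.zero_apply]; linarith [hy.1 i, hy.2 i]⟩
  calc UnitAddTorus.mFourierCoeff (torusSlice f y) 0
      = ∫ x, torusSlice f y x ∂torusHaar d := by
        simp [mFourierCoeff_eq_integral_torusHaar, UnitAddTorus.mFourier_zero]
    _ = ∫ x, torusSlice f 0 x ∂torusHaar d :=
        integral_torusSlice_eq hper (convex_Icc _ _)
          (fun θ y hy => hf (ofReIm θ y) (ofReIm_mem_strip.2 hy)) hy hzero
    _ = 0 := by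
        simp only [integral_torusHaar, torusSlice_toTorus hper, ofReIm_zero]
        rw [havg, smul_zero]

lemma IsSol.mFourierCoeff_torusSlice_eq {f g : (Fin d → ℂ) → ℂ} {r : ℝ} {ω : Fin d → ℝ}
    (hf : IsSol d r ω g f) (hg : ∀ z ∈ strip d r, ContinuousAt g z) (hper : Per d g)
    {y : Fin d → ℝ} (hy : y ∈ Set.Icc (fun _ => -r) fun _ => r) (k : Fin d → ℤ) :
    UnitAddTorus.mFourierCoeff (torusSlice g y) k =
      I * (∑ i, ω i * k i : ℝ) * UnitAddTorus.mFourierCoeff (torusSlice f y) k := by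
  obtain ⟨hdiff, hfper, -, hsol⟩ := hf
  have hmem (θ : Fin d → ℝ) : ofReIm θ y ∈ strip d r := ofReIm_mem_strip.2 hy
  exact mFourierCoeff_eq_of_hasDerivAt
    (continuous_torusSlice hfper fun θ => (hdiff _ (hmem θ)).continuousAt)
    (continuous_torusSlice hper fun θ => hg _ (hmem θ))
    (hasDerivAt_torusSlice_add hfper hper (fun θ => hdiff _ (hmem θ)) fun θ => hsol _ (hmem θ)) k

end Strip

section SmallDivisors

variable {d : ℕ} {c τ : ℝ} {ω : Fin d → ℝ}

/-- The class `DC(c, τ)` of Diophantine frequency vectors, with the size of `k` measured in the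
maximum norm. -/
def IsDiophantine (c τ : ℝ) (ω : Fin d → ℝ) : Prop :=
  ∀ k : Fin d → ℤ, k ≠ 0 →
    c / ‖(fun i => (k i : ℝ) : Fin d → ℝ)‖ ^ τ ≤ |∑ i, ω i * (k i : ℝ)|

lemma IsDiophantine.le_sum_abs_rpow_mul (hω : IsDiophantine c τ ω) (hτ : 0 ≤ τ) {k : Fin d → ℤ}
    (hk : k ≠ 0) : c ≤ (∑ i, |(k i : ℝ)|) ^ τ * |∑ i, ω i * (k i : ℝ)| := by
  have hnorm_pos : 0 < ‖(fun i => (k i : ℝ) : Fin d → ℝ)‖ :=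
    norm_pos_iff.2 fun h => hk (funext fun i => Int.cast_eq_zero.1 (congrFun h i))
  have hnorm_le : ‖(fun i => (k i : ℝ) : Fin d → ℝ)‖ ≤ ∑ i, |(k i : ℝ)| :=
    (pi_norm_le_iff_of_nonneg (by positivity)).2 fun i =>
      Finset.single_le_sum (f := fun i => |(k i : ℝ)|) (fun _ _ => abs_nonneg _) (Finset.mem_univ i)
  calc c ≤ |∑ i, ω i * (k i : ℝ)| * ‖(fun i => (k i : ℝ) : Fin d → ℝ)‖ ^ τ :=
        (div_le_iff₀ (by positivity)).1 (hω k hk)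
    _ ≤ (∑ i, |(k i : ℝ)|) ^ τ * |∑ i, ω i * (k i : ℝ)| := by
        rw [mul_comm]
        gcongr

lemma IsSol.norm_mFourierCoeff_torusSlice_le {f g : (Fin d → ℂ) → ℂ} {r δ M : ℝ} (hτ : 0 ≤ τ)
    (hc : 0 < c) (hδ : 0 < δ) (hω : IsDiophantine c τ ω)
    (hg : ∀ z ∈ strip d (r + δ), DifferentiableAt ℂ g z) (hper : Per d g)
    (hM : ∀ z ∈ strip d (r + δ), ‖g z‖ ≤ M) (hf : IsSol d r ω g f) {y : Fin d → ℝ}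
    (hy : y ∈ Set.Icc (fun _ => -r) fun _ => r) {k : Fin d → ℤ} (hk : k ≠ 0) :
    ‖UnitAddTorus.mFourierCoeff (torusSlice f y) k‖ ≤
      (2 * τ / δ) ^ τ * M / c * Real.exp (-(δ / 2 * ∑ i, |(k i : ℝ)|)) := by
  have hcoeff : ‖UnitAddTorus.mFourierCoeff (torusSlice g y) k‖ =
      |∑ i, ω i * (k i : ℝ)| * ‖UnitAddTorus.mFourierCoeff (torusSlice f y) k‖ := by
    rw [hf.mFourierCoeff_torusSlice_eq (fun z hz => (hg z fun i => (hz i).trans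
      (by linarith)).continuousAt) hper hy k]
    simp only [norm_mul, norm_I, one_mul, norm_real, Real.norm_eq_abs]
  set m := ∑ i, |(k i : ℝ)|
  have hm : 0 ≤ m := Finset.sum_nonneg fun _ _ => abs_nonneg _
  rw [div_mul_eq_mul_div, le_div_iff₀' hc]
  calc c * ‖UnitAddTorus.mFourierCoeff (torusSlice f y) k‖
      ≤ m ^ τ * ‖UnitAddTorus.mFourierCoeff (torusSlice g y) k‖ := by
        rw [hcoeff, ← mul_assoc]
        gcongr
        exact hω.le_sum_abs_rpow_mul hτ hk
    _ ≤ (2 * τ / δ) ^ τ * Real.exp (δ / 2 * m) * (M * Real.exp (-(δ * m))) := by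
        gcongr
        · rw [mul_comm 2 τ, ← div_div_eq_mul_div]
          exact rpow_le_mul_exp hτ (half_pos hδ) hm
        · exact norm_mFourierCoeff_torusSlice_le_mul_exp hδ.le hg hper hM hy k
    _ = (2 * τ / δ) ^ τ * M * Real.exp (-(δ / 2 * m)) := by
        rw [mul_mul_mul_comm, ← Real.exp_add]
        ring_nf

theorem stmt1_general {Δ δ M : ℝ} {g f : (Fin d → ℂ) → ℂ} (hτ : 0 ≤ τ) (hc : 0 < c) (hδ : 0 < δ)
    (hω : IsDiophantine c τ ω) (hg : ∀ z ∈ strip d Δ, DifferentiableAt ℂ g z) (hper : Per d g)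
    (hM : ∀ z ∈ strip d Δ, ‖g z‖ ≤ M) (hf : IsSol d (Δ - δ) ω g f) {z : Fin d → ℂ}
    (hz : z ∈ strip d (Δ - δ)) :
    ‖f z‖ ≤ Real.exp 2 * (2 * τ) ^ τ * (4 * d) ^ d / δ ^ ((d : ℝ) + τ) * M / c := by
  obtain ⟨θ, y, rfl⟩ : ∃ θ y, z = ofReIm θ y :=
    ⟨fun i => (z i).re, fun i => (z i).im, funext fun i => (re_add_im (z i)).symm⟩
  have hy := ofReIm_mem_strip.1 hz
  have hM_nonneg : 0 ≤ M := (norm_nonneg _).trans (hM _ fun i => (hz i).trans (by linarith))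
  have ⟨hf_diff, hf_per, hf_avg, _⟩ := hf
  have hcoeff_zero := mFourierCoeff_torusSlice_zero_of_zeroAvg hf_diff hf_per hf_avg hy
  have hf_cont : Continuous (torusSlice f y) :=
    continuous_torusSlice hf_per fun θ => (hf_diff _ (ofReIm_mem_strip.2 hy)).continuousAt
  rw [← sub_add_cancel Δ δ] at hg hM
  rw [← torusSlice_toTorus hf_per]
  refine norm_le_of_sum_norm_mFourierCoeff_le hf_cont (fun S => ?_) _
  calc ∑ k ∈ S, ‖UnitAddTorus.mFourierCoeff (torusSlice f y) k‖
      = ∑ k ∈ S.erase 0, ‖UnitAddTorus.mFourierCoeff (torusSlice f y) k‖ :=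
        (Finset.sum_erase S (by rw [hcoeff_zero, norm_zero])).symm
    _ ≤ ∑ k ∈ S.erase 0, (2 * τ / δ) ^ τ * M / c * Real.exp (-(δ / 2 * ∑ i, |(k i : ℝ)|)) :=
        Finset.sum_le_sum fun k hk => hf.norm_mFourierCoeff_torusSlice_le hτ hc hδ hω hg hper hM hy
          (Finset.ne_of_mem_erase hk)
    _ ≤ (2 * τ / δ) ^ τ * M / c * (Real.exp 2 * (2 * d / (δ / 2)) ^ d) := by
        rw [← Finset.mul_sum]
        gcongr
        simpa using sum_exp_neg_mul_sum_abs_le_of_zero_notMem (half_pos hδ) (S.notMem_erase 0)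
    _ = Real.exp 2 * (2 * τ) ^ τ * (4 * d) ^ d / δ ^ ((d : ℝ) + τ) * M / c := by
        rw [Real.rpow_add hδ, Real.rpow_natCast, Real.div_rpow (by positivity) hδ.le,
          div_div_eq_mul_div, div_pow]
        ring_nf

end SmallDivisors

/-- **Fundamental lemma (quantitative estimate).** There is `C(τ,d)` depending only on `τ` and
`d` so that the zero-average solution `f` of `L_ω f = g` satisfies
`|f|_{Δ-δ} ≤ C(τ,d) δ^{-(d+τ)} |g|_Δ / c`. -/
theorem stmt1 (d : ℕ) (hd : 1 ≤ d) (τ : ℝ) (hτ : (d : ℝ) - 1 < τ) :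
    ∃ C : ℝ, 0 < C ∧
      ∀ (c Δ δ M : ℝ) (ω : Fin d → ℝ) (g f : (Fin d → ℂ) → ℂ),
        0 < c → 0 < δ → δ < Δ →
        (∀ k : Fin d → ℤ, k ≠ 0 →
          c / ‖(fun i => (k i : ℝ) : Fin d → ℝ)‖ ^ τ ≤ |∑ i, ω i * (k i : ℝ)|) →
        (∀ z ∈ strip d Δ, DifferentiableAt ℂ g z) → Per d g → ZeroAvg d g →
        (∀ z ∈ strip d Δ, ‖g z‖ ≤ M) →
        IsSol d (Δ - δ) ω g f →
        ∀ z ∈ strip d (Δ - δ), ‖f z‖ ≤ C / δ ^ ((d : ℝ) + τ) * M / c := by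
  have hτ_pos : 0 < τ := (sub_nonneg.2 (mod_cast hd)).trans_lt hτ
  exact ⟨Real.exp 2 * (2 * τ) ^ τ * (4 * d) ^ d, by positivity,
    fun c Δ δ M ω g f hc hδ _ hω hg hper _ hM hf z hz =>
      stmt1_general hτ_pos.le hc hδ hω hg hper hM hf hz⟩
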